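/- arXiv:2303.16481 — 6 statements merged into one kernel-verified Lean document; each statement's English description precedes it below -/
import Mathlib

section
/- Let X be an involutive BE algebra. Then for all x, y ∈ X: (1) x ≤_Q y implies x = y∧x and y = x∨y; (2) the relation ≤_Q is reflexive and antisymmetric; (3) x∨y = (x*∧y*)*; (4) x ≤_Q y implies x ≤ y; (5) 0 ≤_Q x and x ≤_Q 1; (6) 0∧x = 0, x∧0 = 0, 1∧x = x and x∧1 = x; (7) x∧(y∧x) = y∧x and x∧(x∧y) = x∧y. -/
/-- A bounded involutive BE algebra. -/
class InvBE (X : Type*) where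
  imp : X → X → X
  one : X
  zero : X
  be1 : ∀ x : X, imp x x = one
  be2 : ∀ x : X, imp x one = one
  be3 : ∀ x : X, imp one x = x
  be4 : ∀ x y z : X, imp x (imp y z) = imp y (imp x z)
  bound : ∀ x : X, imp zero x = one
  dn : ∀ x : X, imp (imp x zero) zero = x

namespace InvBE

variable {X : Type*} [InvBE X]

/-- Negation: `x* = x → 0`. -/
def neg (x : X) : X := imp x zero

/-- `x ∨ y = (x → y) → y`. -/
def sup (x y : X) : X := imp (imp x y) y

/-- `x ∧ y = ((x* → y*) → y*)*`. -/
def inf (x y : X) : X := neg (imp (imp (neg x) (neg y)) (neg y))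

/-- `x ≤ y` iff `x → y = 1`. -/
def le (x y : X) : Prop := imp x y = one

/-- `x ≤_Q y` iff `x = x ∧ y`. -/
def leQ (x y : X) : Prop := x = inf x y

end InvBE

/-!
Since `x ∧ y = (x* ∨ y*)*` and negation is an order-reversing involution, every fact about `∧` is
the dual of a fact about `∨`, and those are immediate from `x ∨ y = (x → y) → y` by exchange: both
`x` and `y` lie below `x ∨ y`, and `x ≤ y` gives `x ∨ y = y`. Dually, `x ∧ y` lies below `x` and
`y`, and `y ≤ x` gives `x ∧ y = y`.
-/

namespace InvBE

variable {X : Type*} [InvBE X]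

theorem neg_neg (x : X) : neg (neg x) = x := dn x

theorem neg_zero : neg (zero : X) = one := be1 zero

theorem neg_one : neg (one : X) = zero := be3 zero

theorem neg_imp_neg (x y : X) : imp (neg x) (neg y) = imp y x :=
  calc imp (neg x) (neg y) = imp y (neg (neg x)) := be4 (neg x) y zero
    _ = imp y x := by rw [neg_neg]

theorem neg_le_neg_iff {x y : X} : le (neg x) (neg y) ↔ le y x := by
  unfold le
  rw [neg_imp_neg]

theorem neg_le_of_neg_le {x y : X} (h : le (neg x) y) : le (neg y) x := by
  rwa [← neg_le_neg_iff, neg_neg]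

theorem le_sup_left (x y : X) : le x (sup x y) :=
  calc imp x (imp (imp x y) y) = imp (imp x y) (imp x y) := be4 x (imp x y) y
    _ = one := be1 (imp x y)

theorem le_sup_right (x y : X) : le y (sup x y) :=
  calc imp y (imp (imp x y) y) = imp (imp x y) (imp y y) := be4 y (imp x y) y
    _ = one := by rw [be1, be2]

theorem sup_eq_right_of_le {x y : X} (h : le x y) : sup x y = y :=
  calc imp (imp x y) y = imp one y := congrArg (imp · y) h
    _ = y := be3 y

theorem sup_zero (x : X) : sup x zero = x := dn x

theorem one_sup (x : X) : sup one x = one := by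
  unfold sup
  rw [be3, be1]

theorem inf_eq_neg_sup_neg (x y : X) : inf x y = neg (sup (neg x) (neg y)) := rfl

theorem sup_eq_neg_inf_neg (x y : X) : sup x y = neg (inf (neg x) (neg y)) := by
  rw [inf_eq_neg_sup_neg, neg_neg, neg_neg, neg_neg]

theorem inf_le_left (x y : X) : le (inf x y) x :=
  neg_le_of_neg_le (le_sup_left (neg x) (neg y))

theorem inf_le_right (x y : X) : le (inf x y) y :=
  neg_le_of_neg_le (le_sup_right (neg x) (neg y))

theorem inf_eq_right_of_le {x y : X} (h : le y x) : inf x y = y := by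
  rw [inf_eq_neg_sup_neg, sup_eq_right_of_le (neg_le_neg_iff.mpr h), neg_neg]

theorem inf_one (x : X) : inf x one = x := by
  rw [inf_eq_neg_sup_neg, neg_one, sup_zero, neg_neg]

theorem zero_inf (x : X) : inf zero x = zero := by
  rw [inf_eq_neg_sup_neg, neg_zero, one_sup, neg_one]

theorem inf_zero (x : X) : inf x zero = zero := inf_eq_right_of_le (bound x)

theorem one_inf (x : X) : inf one x = x := inf_eq_right_of_le (be2 x)

theorem inf_inf_self_right (x y : X) : inf x (inf y x) = inf y x :=
  inf_eq_right_of_le (inf_le_right y x)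

theorem inf_inf_self_left (x y : X) : inf x (inf x y) = inf x y :=
  inf_eq_right_of_le (inf_le_left x y)

theorem leQ.le {x y : X} (h : leQ x y) : le x y :=
  calc imp x y = imp (inf x y) y := congrArg (imp · y) h
    _ = one := inf_le_right x y

theorem leQ.inf_eq_right {x y : X} (h : leQ x y) : inf y x = x := inf_eq_right_of_le h.le

theorem leQ.sup_eq_right {x y : X} (h : leQ x y) : sup x y = y := sup_eq_right_of_le h.le

theorem leQ.refl (x : X) : leQ x x := (inf_eq_right_of_le (be1 x)).symm

theorem leQ.antisymm {x y : X} (hxy : leQ x y) (hyx : leQ y x) : x = y :=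
  calc x = inf y x := hxy.inf_eq_right.symm
    _ = y := Eq.symm hyx

end InvBE

open InvBE in
theorem stmt_0 {X : Type*} [InvBE X] :
    (∀ x y : X, leQ x y → x = inf y x ∧ y = sup x y) ∧
    (∀ x : X, leQ x x) ∧
    (∀ x y : X, leQ x y → leQ y x → x = y) ∧
    (∀ x y : X, sup x y = neg (inf (neg x) (neg y))) ∧
    (∀ x y : X, leQ x y → le x y) ∧
    (∀ x : X, leQ (zero : X) x ∧ leQ x (one : X)) ∧
    (∀ x : X, inf (zero : X) x = zero ∧ inf x (zero : X) = zero ∧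
      inf (one : X) x = x ∧ inf x (one : X) = x) ∧
    (∀ x y : X, inf x (inf y x) = inf y x ∧ inf x (inf x y) = inf x y) := by
  exact ⟨fun _ _ h => ⟨h.inf_eq_right.symm, h.sup_eq_right.symm⟩,
    leQ.refl,
    fun _ _ => leQ.antisymm,
    sup_eq_neg_inf_neg,
    fun _ _ => leQ.le,
    fun x => ⟨(zero_inf x).symm, (inf_one x).symm⟩,
    fun x => ⟨zero_inf x, inf_zero x, one_inf x, inf_one x⟩,
    fun x y => ⟨inf_inf_self_right x y, inf_inf_self_left x y⟩⟩
end

section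
/- Let X be a quantum-Wajsberg algebra. Then for all x, y ∈ X: (1) x→(y∧x) = x→y; (2) x ≤_Q x*→y and x ≤_Q y→x; (3) x→y = 0 iff (x = 1 and y = 0); (4) (x→y)*∧x = (x→y)*; (5) (x∧y)∧y = x∧y; (6) x∧y ≤_Q y and y ≤_Q x∨y; (7) x∨(y∧x) = x; (8) x∧(y∨x) = x; (9) (x→y)→(y∧x) = x; (10) (x∨y)→y = x→y; (11) (x∨y)∨y = x∨y; (12) x ≤ y iff y∧x = x. -/
namespace InvBE

variable {X : Type*} [InvBE X]

theorem neg_eq_one_iff {x : X} : neg x = one ↔ x = zero :=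
  ⟨fun h => by rw [← neg_neg x, h, neg_one], fun h => by rw [h, neg_zero]⟩

theorem neg_eq_zero_iff {x : X} : neg x = zero ↔ x = one :=
  ⟨fun h => by rw [← neg_neg x, h, neg_zero], fun h => by rw [h, neg_one]⟩

theorem neg_inf (x y : X) : neg (inf x y) = sup (neg x) (neg y) := neg_neg _

theorem neg_sup (x y : X) : neg (sup x y) = inf (neg x) (neg y) := by
  rw [← neg_neg (inf _ _), neg_inf, neg_neg, neg_neg]

theorem imp_eq_zero_iff {x y : X} : imp x y = zero ↔ x = one ∧ y = zero := by
  constructor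
  · intro h
    have hy : y = zero := by
      rw [← neg_eq_one_iff]
      calc neg y = imp y (imp x y) := by rw [h, neg]
        _ = one := by rw [be4, be1, be2]
    subst hy
    exact ⟨neg_eq_zero_iff.mp h, rfl⟩
  · rintro ⟨rfl, rfl⟩
    exact be3 _

/-- Implicative-orthomodular algebras: a class of involutive BE algebras properly containing the
quantum-Wajsberg algebras, and the setting in which the identities for `→`, `∧`, `∨` are derived.
On an ortholattice, with `x → y` the join of `x*` and `y`, the law below is orthomodularity. -/
class Orthomodular (X : Type*) [InvBE X] : Prop where
  leQ_imp (x y : X) : leQ x (imp y x)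

theorem orthomodular_of_quantumWajsberg
    (qw : ∀ x y z : X, imp x (inf (inf x y) (inf z x)) = inf (imp x y) (imp x z)) :
    Orthomodular X where
  leQ_imp x y := by
    have qw_zero := qw (neg x) zero (neg y)
    rwa [inf_zero, zero_inf, neg_imp_neg, ← neg, neg_neg] at qw_zero

open Orthomodular (leQ_imp)

variable [Orthomodular X]

theorem leQ_neg_imp (x y : X) : leQ x (imp (neg x) y) := by
  rw [← neg_neg y, neg_imp_neg]
  exact leQ_imp x (neg y)

theorem sup_neg_imp (x y : X) : sup x (neg (imp x y)) = x := by
  have h := leQ_neg_imp (neg x) y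
  rw [leQ, neg_neg] at h
  rw [← neg_neg (sup _ _), neg_sup, neg_neg, ← h, neg_neg]

theorem imp_imp_inf (x y : X) : imp (imp x y) (inf y x) = x :=
  calc imp (imp x y) (inf y x)
      = imp (sup (neg y) (neg x)) (neg (imp x y)) := by rw [← neg_imp_neg, neg_inf]
    _ = imp (imp (imp x y) (neg x)) (neg (imp x y)) := by rw [sup, neg_imp_neg]
    _ = sup x (neg (imp x y)) := by rw [sup, ← neg_imp_neg (neg x), neg_neg]
    _ = x := sup_neg_imp x y

theorem sup_imp_self (x y : X) : sup (imp x y) y = imp x y := by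
  have h := imp_imp_inf (imp x y) y
  rwa [← leQ_imp y x] at h

-- `(x ∨ y) → y` and `(x → y) ∨ y` are both `((x → y) → y) → y`.
theorem imp_sup_self (x y : X) : imp (sup x y) y = imp x y := sup_imp_self x y

theorem sup_sup_self (x y : X) : sup (sup x y) y = sup x y := sup_imp_self (imp x y) y

theorem inf_inf_self (x y : X) : inf (inf x y) y = inf x y := by
  rw [← neg_neg (inf (inf x y) y), neg_inf, neg_inf, sup_sup_self, ← neg_inf, neg_neg]

theorem inf_neg_imp (x y : X) : inf (neg (imp x y)) x = neg (imp x y) := by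
  rw [← neg_imp_neg, ← neg_neg x, ← neg_sup, neg_neg, sup_imp_self]

theorem imp_inf_self (x y : X) : imp x (inf y x) = imp x y := by
  rw [← neg_imp_neg, neg_inf, imp_sup_self, neg_imp_neg]

theorem sup_inf_self (x y : X) : sup x (inf y x) = x := by
  rw [sup, imp_inf_self, imp_imp_inf]

theorem inf_sup_self (x y : X) : inf x (sup y x) = x := (leQ_imp x (imp y x)).symm

theorem le_iff_inf_eq_right {x y : X} : le x y ↔ inf y x = x := by
  constructor
  · intro h
    rw [← be3 (inf y x), ← h, imp_imp_inf]
  · intro h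
    rw [le, ← imp_inf_self, h, be1]

end InvBE

open InvBE in
theorem stmt_5_general (X : Type*) [InvBE X] [Orthomodular X] :
    (∀ x y : X, imp x (inf y x) = imp x y) ∧
    (∀ x y : X, leQ x (imp (neg x) y) ∧ leQ x (imp y x)) ∧
    (∀ x y : X, imp x y = zero ↔ (x = one ∧ y = zero)) ∧
    (∀ x y : X, inf (neg (imp x y)) x = neg (imp x y)) ∧
    (∀ x y : X, inf (inf x y) y = inf x y) ∧
    (∀ x y : X, leQ (inf x y) y ∧ leQ y (sup x y)) ∧
    (∀ x y : X, sup x (inf y x) = x) ∧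
    (∀ x y : X, inf x (sup y x) = x) ∧
    (∀ x y : X, imp (imp x y) (inf y x) = x) ∧
    (∀ x y : X, imp (sup x y) y = imp x y) ∧
    (∀ x y : X, sup (sup x y) y = sup x y) ∧
    (∀ x y : X, le x y ↔ inf y x = x) :=
  ⟨imp_inf_self,
    fun x y => ⟨leQ_neg_imp x y, Orthomodular.leQ_imp x y⟩,
    fun _ _ => imp_eq_zero_iff,
    inf_neg_imp,
    inf_inf_self,
    fun x y => ⟨(inf_inf_self x y).symm, Orthomodular.leQ_imp y (imp x y)⟩,
    InvBE.sup_inf_self,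
    InvBE.inf_sup_self,
    imp_imp_inf,
    imp_sup_self,
    sup_sup_self,
    fun _ _ => le_iff_inf_eq_right⟩

open InvBE in
theorem stmt_5 {X : Type*} [InvBE X]
    (qw : ∀ x y z : X, imp x (inf (inf x y) (inf z x)) = inf (imp x y) (imp x z)) :
    (∀ x y : X, imp x (inf y x) = imp x y) ∧
    (∀ x y : X, leQ x (imp (neg x) y) ∧ leQ x (imp y x)) ∧
    (∀ x y : X, imp x y = zero ↔ (x = one ∧ y = zero)) ∧
    (∀ x y : X, inf (neg (imp x y)) x = neg (imp x y)) ∧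
    (∀ x y : X, inf (inf x y) y = inf x y) ∧
    (∀ x y : X, leQ (inf x y) y ∧ leQ y (sup x y)) ∧
    (∀ x y : X, sup x (inf y x) = x) ∧
    (∀ x y : X, inf x (sup y x) = x) ∧
    (∀ x y : X, imp (imp x y) (inf y x) = x) ∧
    (∀ x y : X, imp (sup x y) y = imp x y) ∧
    (∀ x y : X, sup (sup x y) y = sup x y) ∧
    (∀ x y : X, le x y ↔ inf y x = x) := by
  have := orthomodular_of_quantumWajsberg qw
  exact stmt_5_general X
end

section
/- Let (X, →, *, 1) be a Wajsberg algebra. Then x→(y∧z) = (x→y)∧(x→z) for all x, y, z ∈ X. -/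
/-- A Wajsberg algebra. -/
class Wajsberg (X : Type*) where
  imp : X → X → X
  neg : X → X
  one : X
  w1 : ∀ x : X, imp one x = x
  w2 : ∀ x y z : X, imp (imp y z) (imp (imp z x) (imp y x)) = one
  w3 : ∀ x y : X, imp (imp x y) y = imp (imp y x) x
  w4 : ∀ x y : X, imp (imp (neg x) (neg y)) (imp y x) = one

namespace Wajsberg

variable {X : Type*} [Wajsberg X]

/-- `0 = 1*`. -/
def zero : X := neg one

/-- `x ≤ y` iff `x → y = 1`. -/
def le (x y : X) : Prop := imp x y = one

/-- `x ∨ y = (x → y) → y`. -/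
def sup (x y : X) : X := imp (imp x y) y

/-- `x ∧ y = ((x* → y*) → y*)*`. -/
def inf (x y : X) : X := neg (imp (imp (neg x) (neg y)) (neg y))

/-- `x ≤_Q y` iff `x = x ∧ y`. -/
def leQ (x y : X) : Prop := x = inf x y

end Wajsberg

/-!
A Wajsberg algebra is a lattice under `≤`, with join `sup` and, since negation is an
order-reversing involution, meet `inf`. Contraposition and exchange of premises give
`(w ⊙ x) → y = w → (x → y)` for the product `w ⊙ x = (w → x*)*`, so `x → ·` is an upper adjoint,
and upper adjoints preserve meets.
-/

namespace Wajsberg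

variable {X : Type*} [Wajsberg X]

protected theorem imp_self (x : X) : imp x x = one := by
  simpa only [w1] using w2 x one one

instance : PartialOrder X where
  le := le
  le_refl := Wajsberg.imp_self
  le_trans x y z hxy hyz := by
    have h := w2 z x y
    rwa [hxy, hyz, w1, w1] at h
  le_antisymm x y hxy hyx := by
    have h := w3 x y
    rw [hxy, hyx, w1, w1] at h
    exact h.symm

theorem le_iff_imp_eq_one {x y : X} : x ≤ y ↔ imp x y = one := Iff.rfl

theorem imp_one (x : X) : imp x one = one := by
  have imp_one_imp_one : imp (imp x one) one = one := by rw [w3, w1, Wajsberg.imp_self]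
  have h := w2 one one x
  rwa [w1, w1, imp_one_imp_one] at h

theorem le_imp (x y : X) : y ≤ imp x y := by
  have h := w2 y x one
  rwa [imp_one, w1, w1] at h

theorem imp_le_imp_right {x y : X} (h : x ≤ y) (z : X) : imp y z ≤ imp x z := by
  have h' := w2 z x y
  rwa [le_iff_imp_eq_one.1 h, w1] at h'

instance : SemilatticeSup X where
  sup := sup
  le_sup_left x y := (le_imp (imp y x) x).trans_eq (w3 y x)
  le_sup_right x y := le_imp (imp x y) y
  sup_le x y z hxz hyz := calc
    imp (imp x y) y ≤ imp (imp z y) y := imp_le_imp_right (imp_le_imp_right hxz y) y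
    _ = imp (imp y z) z := w3 z y
    _ = z := by rw [le_iff_imp_eq_one.1 hyz, w1]

theorem sup_eq_imp_imp (x y : X) : x ⊔ y = imp (imp x y) y := rfl

theorem imp_left_comm (x y z : X) : imp x (imp y z) = imp y (imp x z) := by
  have imp_imp_le (x y z : X) : imp x (imp y z) ≤ imp y (imp x z) := calc
    imp x (imp y z) ≤ imp (y ⊔ z) (imp x z) := w2 z x (imp y z)
    _ ≤ imp y (imp x z) := imp_le_imp_right le_sup_left _
  exact le_antisymm (imp_imp_le x y z) (imp_imp_le y x z)

theorem neg_imp_zero_le (x : X) : imp (neg x) zero ≤ x :=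
  le_of_le_of_eq (w4 x one) (w1 x)

protected theorem zero_le (x : X) : zero ≤ x :=
  (le_imp (neg x) zero).trans (neg_imp_zero_le x)

theorem imp_zero_imp_zero (x : X) : imp (imp x zero) zero = x := by
  rw [← sup_eq_imp_imp, sup_eq_left.2 (Wajsberg.zero_le x)]

theorem neg_eq_imp_zero (x : X) : neg x = imp x zero := by
  apply le_antisymm
  · exact (le_imp (neg zero) (neg x)).trans (w4 zero x)
  · calc
      imp x zero ≤ imp (imp (neg x) zero) zero := imp_le_imp_right (neg_imp_zero_le x) zero
      _ = neg x := imp_zero_imp_zero (neg x)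

protected theorem neg_neg (x : X) : neg (neg x) = x := by
  rw [neg_eq_imp_zero, neg_eq_imp_zero, imp_zero_imp_zero]

theorem imp_neg_comm (x y : X) : imp x (neg y) = imp y (neg x) := by
  rw [neg_eq_imp_zero, neg_eq_imp_zero, imp_left_comm]

theorem neg_imp_comm (x y : X) : imp (neg x) y = imp (neg y) x := by
  rw [← Wajsberg.neg_neg y, imp_neg_comm, Wajsberg.neg_neg, Wajsberg.neg_neg]

theorem neg_le_comm {x y : X} : neg x ≤ y ↔ neg y ≤ x := by
  rw [le_iff_imp_eq_one, neg_imp_comm, le_iff_imp_eq_one]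

theorem le_neg_comm {x y : X} : x ≤ neg y ↔ y ≤ neg x := by
  rw [le_iff_imp_eq_one, imp_neg_comm, le_iff_imp_eq_one]

protected theorem neg_le_neg {x y : X} (h : x ≤ y) : neg y ≤ neg x :=
  le_neg_comm.1 (h.trans_eq (Wajsberg.neg_neg y).symm)

instance : Lattice X where
  inf := inf
  inf_le_left x y := neg_le_comm.1 (le_sup_left : neg x ≤ neg x ⊔ neg y)
  inf_le_right x y := neg_le_comm.1 (le_sup_right : neg y ≤ neg x ⊔ neg y)
  le_inf _ _ _ hxy hxz := le_neg_comm.1 (sup_le (Wajsberg.neg_le_neg hxy) (Wajsberg.neg_le_neg hxz))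

/-- The product `x ⊙ y = (x → y*)*` of a Wajsberg algebra (the Łukasiewicz strong conjunction),
whose residual is `imp`. -/
def mul (x y : X) : X := neg (imp x (neg y))

theorem mul_imp (x y z : X) : imp (mul x y) z = imp x (imp y z) := calc
  imp (neg (imp x (neg y))) z = imp (neg z) (imp x (neg y)) := neg_imp_comm _ _
  _ = imp x (imp (neg z) (neg y)) := imp_left_comm _ _ _
  _ = imp x (imp y z) := by rw [imp_neg_comm, Wajsberg.neg_neg]

theorem gc_mul_imp (x : X) : GaloisConnection (mul · x) (imp x) := fun w y => by
  rw [le_iff_imp_eq_one, mul_imp, le_iff_imp_eq_one]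

end Wajsberg

open Wajsberg in
theorem stmt_14 {X : Type*} [Wajsberg X] :
    ∀ x y z : X, imp x (inf y z) = inf (imp x y) (imp x z) := by
  intro x y z
  exact (gc_mul_imp x).u_inf
end

section
/- If (X, →, *, 1) is a Wajsberg algebra, then (X, ≤, →, →) is a unital commutative quantum-B algebra with unit 1: the relation ≤ (x ≤ y iff x→y = 1) is a partial order on X, and for all x, y, z ∈ X: (QB1) y→z ≤ (x→y)→(x→z); (QB3) y ≤ z implies x→y ≤ x→z; (QB4) x ≤ y→z iff y ≤ x→z; and 1→x = x. -/
/-!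
In a Wajsberg algebra, (W1) and (W3) make `x → y = 1 = y → x` force `x = y`, so that `→` and `1`
form a BCI-algebra. There, substituting `1` into the transitivity axiom (W2) gives `x ≤ x` and
`x ≤ (x → y) → y`. Since (W2) also makes `→` antitone in its first argument, `x ≤ y → z` implies
`y ≤ (y → z) → z ≤ x → z`. This exchange law, applied to (W2) itself, swaps its two premises and
yields `y → z ≤ (x → y) → (x → z)`, and monotonicity in the second argument is the case `y → z = 1`.
-/

/-- A BCI-algebra, written with its implication `⇨` and unit `1`, which need not be a greatest
element. The axioms are the Wajsberg axioms (W1) and (W2) together with antisymmetry of the relation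
`x ⇨ y = 1`; the usual axioms `x ⇨ ((x ⇨ y) ⇨ y) = 1` and `x ⇨ x = 1` follow from these. -/
class BCIAlgebra (X : Type*) extends HImp X, One X where
  one_himp : ∀ x : X, 1 ⇨ x = x
  himp_trans : ∀ x y z : X, (x ⇨ y) ⇨ ((y ⇨ z) ⇨ (x ⇨ z)) = 1
  eq_of_himp_eq_one : ∀ x y : X, x ⇨ y = 1 → y ⇨ x = 1 → x = y

namespace BCIAlgebra

variable {X : Type*} [BCIAlgebra X]

instance toPartialOrder : PartialOrder X where
  le x y := x ⇨ y = 1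
  le_refl x := by simpa only [one_himp] using himp_trans 1 1 x
  le_trans x y z hxy hyz := by
    simpa only [hxy, hyz, one_himp] using himp_trans x y z
  le_antisymm := eq_of_himp_eq_one

theorem le_iff_himp_eq_one {x y : X} : x ≤ y ↔ x ⇨ y = 1 := Iff.rfl

theorem one_le_iff {x : X} : 1 ≤ x ↔ x = 1 := by
  rw [le_iff_himp_eq_one, one_himp]

theorem himp_le_himp_himp_himp_right (x y z : X) : x ⇨ y ≤ (y ⇨ z) ⇨ (x ⇨ z) :=
  himp_trans x y z

theorem himp_le_himp_right {x y : X} (h : x ≤ y) (z : X) : y ⇨ z ≤ x ⇨ z := by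
  have := himp_le_himp_himp_himp_right x y z
  rwa [le_iff_himp_eq_one.mp h, one_le_iff] at this

theorem le_himp_himp (x y : X) : x ≤ (x ⇨ y) ⇨ y := by
  simpa only [one_himp] using himp_le_himp_himp_himp_right 1 x y

theorem le_himp_of_le_himp {x y z : X} (h : x ≤ y ⇨ z) : y ≤ x ⇨ z :=
  calc
    y ≤ (y ⇨ z) ⇨ z := le_himp_himp y z
    _ ≤ x ⇨ z := himp_le_himp_right h z

theorem le_himp_comm {x y z : X} : x ≤ y ⇨ z ↔ y ≤ x ⇨ z :=
  ⟨le_himp_of_le_himp, le_himp_of_le_himp⟩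

theorem himp_le_himp_himp_himp_left (x y z : X) : y ⇨ z ≤ (x ⇨ y) ⇨ (x ⇨ z) :=
  le_himp_comm.mp (himp_le_himp_himp_himp_right x y z)

theorem himp_le_himp_left {y z : X} (h : y ≤ z) (x : X) : x ⇨ y ≤ x ⇨ z := by
  have := himp_le_himp_himp_himp_left x y z
  rwa [le_iff_himp_eq_one.mp h, one_le_iff] at this

end BCIAlgebra

namespace Wajsberg

variable {X : Type*} [Wajsberg X]

theorem eq_of_imp_eq_one {x y : X} (hxy : imp x y = one) (hyx : imp y x = one) : x = y :=
  calc
    x = imp (imp y x) x := by rw [hyx, w1]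
    _ = imp (imp x y) y := w3 y x
    _ = y := by rw [hxy, w1]

instance toBCIAlgebra : BCIAlgebra X where
  himp := imp
  one := one
  one_himp := w1
  himp_trans x y z := w2 z x y
  eq_of_himp_eq_one _ _ := eq_of_imp_eq_one

end Wajsberg

open BCIAlgebra in
theorem stmt_17_general {X : Type*} [BCIAlgebra X] :
    (∀ x : X, x ≤ x) ∧
    (∀ x y : X, x ≤ y → y ≤ x → x = y) ∧
    (∀ x y z : X, x ≤ y → y ≤ z → x ≤ z) ∧
    (∀ x y z : X, y ⇨ z ≤ (x ⇨ y) ⇨ (x ⇨ z)) ∧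
    (∀ x y z : X, y ≤ z → x ⇨ y ≤ x ⇨ z) ∧
    (∀ x y z : X, x ≤ y ⇨ z ↔ y ≤ x ⇨ z) ∧
    (∀ x : X, 1 ⇨ x = x) :=
  ⟨le_refl, fun _ _ => le_antisymm, fun _ _ _ => le_trans, himp_le_himp_himp_himp_left,
    fun x _ _ h => himp_le_himp_left h x, fun _ _ _ => le_himp_comm, one_himp⟩

open Wajsberg in
theorem stmt_17 {X : Type*} [Wajsberg X] :
    (∀ x : X, le x x) ∧
    (∀ x y : X, le x y → le y x → x = y) ∧
    (∀ x y z : X, le x y → le y z → le x z) ∧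
    (∀ x y z : X, le (imp y z) (imp (imp x y) (imp x z))) ∧
    (∀ x y z : X, le y z → le (imp x y) (imp x z)) ∧
    (∀ x y z : X, le x (imp y z) ↔ le y (imp x z)) ∧
    (∀ x : X, imp one x = x) :=
  stmt_17_general
end

section
/- Let (X, →, *, 1) be an involutive BE algebra and define x⊙y = (x→y*)*. Then X satisfies the quantum-Wajsberg axiom (QW): x→((x∧y)∧(z∧x)) = (x→y)∧(x→z) for all x, y, z, if and only if X satisfies the quantum-MV axiom (Pqmv): x⊙((x*∨y)∨(z∨x*)) = (x⊙y)∨(x⊙z) for all x, y, z. (Hence quantum-Wajsberg algebras are definitionally equivalent to quantum-MV algebras.) -/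
/-!
Negation is an involution, so it swaps `∧` with `∨` and turns `x → y` into `x ⊙ y*`. Negating both
sides of (QW) at `(x, y, z)` therefore gives exactly (Pqmv) at `(x, y*, z*)`, and every pair of
elements has the form `(y*, z*)`.
-/

namespace InvBE

variable {X : Type*} [InvBE X]

/-- The product `x ⊙ y = (x → y*)*`, the operation in terms of which (Pqmv) is stated. -/
def mul (x y : X) : X := neg (imp x (neg y))

theorem neg_involutive : Function.Involutive (neg : X → X) := dn

theorem mul_neg (x y : X) : mul x (neg y) = neg (imp x y) := by
  rw [mul, neg_involutive y]

theorem pqmv_neg_iff_qw (x y z : X) :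
    mul x (sup (sup (neg x) (neg y)) (sup (neg z) (neg x))) = sup (mul x (neg y)) (mul x (neg z)) ↔
      imp x (inf (inf x y) (inf z x)) = inf (imp x y) (imp x z) := by
  simp only [← neg_inf, mul_neg, neg_involutive.injective.eq_iff]

end InvBE

open InvBE in
theorem stmt_18 {X : Type*} [InvBE X]
    (odot : X → X → X) (hodot : ∀ x y : X, odot x y = neg (imp x (neg y))) :
    (∀ x y z : X, imp x (inf (inf x y) (inf z x)) = inf (imp x y) (imp x z)) ↔
    (∀ x y z : X,
      odot x (sup (sup (neg x) y) (sup z (neg x))) = sup (odot x y) (odot x z)) := by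
  obtain rfl : odot = mul := funext₂ hodot
  refine forall_congr' fun x => Iff.trans ?_ InvBE.neg_involutive.surjective.forall₂.symm
  exact forall₂_congr fun y z => (pqmv_neg_iff_qw x y z).symm
end

section
/- Let X be an involutive BE algebra. Then X satisfies both the quantum-Wajsberg axiom (QW): x→((x∧y)∧(z∧x)) = (x→y)∧(x→z) for all x, y, z, and the antisymmetry condition (An): x→y = 1 and y→x = 1 imply x = y, if and only if X is ∨-commutative, i.e., x∨y = y∨x for all x, y ∈ X. (In other words, a quantum-Wajsberg algebra is a Wajsberg algebra if and only if ≤ is antisymmetric.) -/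
/-!
Put `x ⊙ y = (x → y*)*`. Then `x ⊙ y ≤ z` iff `x ≤ y → z`, and `x ∧ y = (y → x) ⊙ y` is always
a lower bound of `x` and `y`. Both sides of the equivalence amount to divisibility: `x ≤ y` implies
`x = x ∧ y`. Divisibility makes `≤` a partial order for which `∧` is the meet, so that `∧`, and
dually `∨`, is commutative, and `x → ·`, being a right adjoint, preserves `∧`, which gives (QW).
Conversely, let `x ≤ y`. Then (QW) with `z = 1` gives `x ≤ (x ∧ y) ∧ x`, and antisymmetry turns this
into `x = x ∧ y`. If `∨` is commutative, then `x* = y* ∨ x* = x* ∨ y*`, and negating gives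
`x = x ∧ y` again.
-/

namespace InvBE

variable {X : Type*} [InvBE X]

theorem imp_neg_comm (x y : X) : imp x (neg y) = imp y (neg x) := be4 x y zero

theorem neg_imp_comm (x y : X) : imp (neg x) y = imp (neg y) x := by
  simpa only [neg_neg] using imp_neg_comm (neg x) (neg y)

/-- The product `x ⊙ y = (x → y*)*`, for which multiplication by `y` is left adjoint to `y → ·`
(`prod_le_iff_le_imp`). -/
def prod (x y : X) : X := neg (imp x (neg y))

theorem prod_imp (x y z : X) : imp (prod x y) z = imp x (imp y z) := by
  rw [prod, neg_imp_comm, be4, neg_imp_neg]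

theorem prod_le_iff_le_imp {x y z : X} : le (prod x y) z ↔ le x (imp y z) := by
  rw [le, le, prod_imp]

theorem one_prod (x : X) : prod one x = x := by
  rw [prod, be3, neg_neg]

theorem prod_one (x : X) : prod x one = x := by
  rw [prod, neg_one]
  exact neg_neg x

theorem inf_eq_prod (x y : X) : inf x y = prod (imp y x) y := by
  rw [inf, neg_imp_neg, prod]

/-- Divisibility: whenever `x ≤ y`, also `x ≤_Q y`, that is, `x = (y → x) ⊙ y`. -/
def Divisible (X : Type*) [InvBE X] : Prop :=
  ∀ ⦃x y : X⦄, le x y → leQ x y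

namespace Divisible

theorem eq_prod (hX : Divisible X) {x y : X} (h : le x y) : x = prod (imp y x) y :=
  (hX h).trans (inf_eq_prod x y)

theorem le_antisymm (hX : Divisible X) {x y : X} (hxy : le x y) (hyx : le y x) : x = y :=
  calc
    x = prod (imp y x) y := hX.eq_prod hxy
    _ = prod one y := by rw [show imp y x = one from hyx]
    _ = y := one_prod y

theorem le_trans (hX : Divisible X) {x y z : X} (hxy : le x y) (hyz : le y z) : le x z := by
  rw [hX.eq_prod hxy, prod_le_iff_le_imp, show imp y z = one from hyz]
  exact be2 _

theorem prod_le_prod_right (hX : Divisible X) {x y : X} (h : le x y) (z : X) :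
    le (prod x z) (prod y z) :=
  prod_le_iff_le_imp.2 (hX.le_trans h (prod_le_iff_le_imp.1 (be1 (prod y z))))

theorem le_inf (hX : Divisible X) {w x y : X} (hx : le w x) (hy : le w y) : le w (inf x y) := by
  have hw : w = prod (imp y w) y := hX.eq_prod hy
  have himp : le (imp y w) (imp y x) := prod_le_iff_le_imp.1 (hw ▸ hx)
  rw [hw, inf_eq_prod]
  exact hX.prod_le_prod_right himp y

theorem le_inf_iff (hX : Divisible X) {w x y : X} : le w (inf x y) ↔ le w x ∧ le w y :=
  ⟨fun h => ⟨hX.le_trans h (inf_le_left x y), hX.le_trans h (inf_le_right x y)⟩,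
    fun h => hX.le_inf h.1 h.2⟩

theorem eq_of_forall_le_iff (hX : Divisible X) {x y : X} (h : ∀ w, le w x ↔ le w y) : x = y :=
  hX.le_antisymm ((h x).1 (be1 x)) ((h y).2 (be1 y))

theorem inf_comm (hX : Divisible X) (x y : X) : inf x y = inf y x :=
  hX.eq_of_forall_le_iff fun w => by rw [hX.le_inf_iff, hX.le_inf_iff, and_comm]

theorem sup_comm (hX : Divisible X) (x y : X) : sup x y = sup y x := by
  rw [sup_eq_neg_inf_neg, hX.inf_comm, ← sup_eq_neg_inf_neg]

theorem imp_inf (hX : Divisible X) (x y z : X) :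
    imp x (inf y z) = inf (imp x y) (imp x z) :=
  hX.eq_of_forall_le_iff fun w => by
    simp only [← prod_le_iff_le_imp, hX.le_inf_iff]

theorem imp_inf_inf_inf (hX : Divisible X) (x y z : X) :
    imp x (inf (inf x y) (inf z x)) = inf (imp x y) (imp x z) := by
  simp only [hX.imp_inf, be1, one_inf, inf_one]

end Divisible

theorem divisible_of_sup_comm (hcomm : ∀ x y : X, sup x y = sup y x) : Divisible X := by
  intro x y h
  have hneg : le (neg y) (neg x) := (neg_imp_neg y x).trans h
  calc
    x = neg (neg x) := (neg_neg x).symm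
    _ = neg (sup (neg y) (neg x)) := by rw [sup_eq_right_of_le hneg]
    _ = neg (sup (neg x) (neg y)) := by rw [hcomm]
    _ = inf x y := (inf_eq_neg_sup_neg x y).symm

theorem divisible_iff_sup_comm : Divisible X ↔ ∀ x y : X, sup x y = sup y x :=
  ⟨Divisible.sup_comm, divisible_of_sup_comm⟩

theorem divisible_of_imp_inf_inf_self (himp : ∀ x y : X, imp x (inf (inf x y) x) = imp x y)
    (antisymm : ∀ x y : X, le x y → le y x → x = y) : Divisible X := by
  intro x y h
  have hx : inf (inf x y) x = x :=
    antisymm _ _ (inf_le_right _ _) ((himp x y).trans h)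
  have hle : le x (inf x y) := by
    simpa only [hx] using inf_le_left (inf x y) x
  exact antisymm _ _ hle (inf_le_left x y)

end InvBE

open InvBE in
theorem stmt_19 {X : Type*} [InvBE X] :
    ((∀ x y z : X, imp x (inf (inf x y) (inf z x)) = inf (imp x y) (imp x z)) ∧
     (∀ x y : X, imp x y = one → imp y x = one → x = y)) ↔
    (∀ x y : X, sup x y = sup y x) := by
  rw [← divisible_iff_sup_comm]
  constructor
  · rintro ⟨qw, antisymm⟩
    have himp (x y : X) : imp x (inf (inf x y) x) = imp x y := by
      simpa only [one_inf, inf_one, be2] using qw x y one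
    exact divisible_of_imp_inf_inf_self himp antisymm
  · intro hX
    exact ⟨hX.imp_inf_inf_inf, fun _ _ => hX.le_antisymm⟩
end
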